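/- The following four identities hold: (I_{t₁}⊗L_{t₂,t₃})∘(Y_{t₁,t₂}⊗I_{t₃}) = Y_{t₁,t₆}∘L_{t₄,t₃} + ((−1)^{σ₂}·λ₃/(λ₂+λ₃))·Y'_{t₁,t₆}∘L'_{t₄,t₃} as linear maps V_{t₄}⊗V_{t₃} → V_{t₁}⊗V_{t₆}; (I_{t₁}⊗L'_{t₂,t₃})∘(Y'_{t₁,t₂}⊗I_{t₃}) = Y'_{t₁,t₉}∘L'_{t₇,t₃} − ((−1)^{σ₂}·λ₁/(λ₁+λ₂))·Y_{t₁,t₉}∘L_{t₇,t₃} as linear maps V_{t₇}⊗V_{t₃} → V_{t₁}⊗V_{t₉}; (I_{t₁}⊗L'_{t₂,t₃})∘(Y_{t₁,t₂}⊗I_{t₃}) = Y_{t₁,t₉}∘L'_{t₄,t₃} as linear maps V_{t₄}⊗V_{t₃} → V_{t₁}⊗V_{t₉}; and (I_{t₁}⊗L_{t₂,t₃})∘(Y'_{t₁,t₂}⊗I_{t₃}) = κ·Y'_{t₁,t₆}∘L_{t₇,t₃} as linear maps V_{t₇}⊗V_{t₃} → V_{t₁}⊗V_{t₆}. -/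

import Mathlib

open TensorProduct

noncomputable section

/-- a triple t = (λ, μ, σ) ∈ ℚ × ℚ × ℤ/2 -/
structure Triple where
  lam : ℚ
  mu : ℚ
  sg : ZMod 2

instance : Add Triple := ⟨fun a b => ⟨a.lam + b.lam, a.mu + b.mu, a.sg + b.sg⟩⟩
instance : Neg Triple := ⟨fun a => ⟨-a.lam, -a.mu, -a.sg⟩⟩
instance : Sub Triple := ⟨fun a b => a + -b⟩

def e₂ : Triple := ⟨0, 1, 0⟩
def e₃ : Triple := ⟨0, 0, 1⟩
/-- t* = (−λ, −μ, σ+1) -/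
def Triple.star (t : Triple) : Triple := ⟨-t.lam, -t.mu, t.sg + 1⟩

/-- the underlying space of every V_t: basis v = (1,0) (degree σ), w = (0,1) (degree σ+1) -/
abbrev V : Type := ℚ × ℚ
abbrev VV : Type := V ⊗[ℚ] V
abbrev VVV : Type := V ⊗[ℚ] VV

def vv : V := (1, 0)
def ww : V := (0, 1)

/-- (−1)^σ -/
def sgn (s : ZMod 2) : ℚ := if s = 0 then 1 else -1

/-- H: v ↦ (μ+1)v, w ↦ (μ−1)w -/
def opH (t : Triple) : V →ₗ[ℚ] V :=
  LinearMap.prodMap ((t.mu + 1) • LinearMap.id) ((t.mu - 1) • LinearMap.id)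
/-- D: multiplication by λ -/
def opD (t : Triple) : V →ₗ[ℚ] V := t.lam • LinearMap.id
/-- E: v ↦ 0, w ↦ λv -/
def opE (t : Triple) : V →ₗ[ℚ] V := (LinearMap.inl ℚ ℚ ℚ) ∘ₗ (t.lam • LinearMap.snd ℚ ℚ ℚ)
/-- F: v ↦ w, w ↦ 0 -/
def opF (t : Triple) : V →ₗ[ℚ] V := (LinearMap.inr ℚ ℚ ℚ) ∘ₗ (LinearMap.fst ℚ ℚ ℚ)
/-- the parity operator x ↦ (−1)^{deg x} x on V_t -/
def opJ (t : Triple) : V →ₗ[ℚ] V :=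
  LinearMap.prodMap (sgn t.sg • LinearMap.id) ((- sgn t.sg) • LinearMap.id)

/-- the four generators H, D, E, F of gl(1|1) -/
inductive Gen | H | D | E | F

/-- H and D have degree 0; E and F have degree 1 -/
def Gen.isEven : Gen → Bool
  | .H => true | .D => true | .E => false | .F => false

def op : Gen → Triple → V →ₗ[ℚ] V
  | .H, t => opH t
  | .D, t => opD t
  | .E, t => opE t
  | .F, t => opF t

/-- the super-Leibniz action X·(x⊗y) = (X·x)⊗y + (−1)^{deg X·deg x}·x⊗(X·y)
on V_{t₁}⊗V_{t₂} (the sign being implemented by the parity operator) -/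
def op2 (g : Gen) (t₁ t₂ : Triple) : VV →ₗ[ℚ] VV :=
  TensorProduct.map (op g t₁) LinearMap.id +
  TensorProduct.map (if g.isEven then LinearMap.id else opJ t₁) (op g t₂)

/-- the linear map ℚ×ℚ → M sending (1,0) ↦ p and (0,1) ↦ q -/
def bmap {M : Type*} [AddCommGroup M] [Module ℚ M] (p q : M) : V →ₗ[ℚ] M :=
  LinearMap.coprod (LinearMap.toSpanSingleton ℚ M p) (LinearMap.toSpanSingleton ℚ M q)

/-- Y_{t₁,t₂} : V_{t₁+t₂+e₂} → V_{t₁}⊗V_{t₂} -/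
def Ymap (t₁ t₂ : Triple) : V →ₗ[ℚ] VV :=
  bmap (vv ⊗ₜ[ℚ] vv) (ww ⊗ₜ[ℚ] vv + sgn t₁.sg • (vv ⊗ₜ[ℚ] ww))

/-- Y'_{t₁,t₂} : V_{t₁+t₂−e₂+e₃} → V_{t₁}⊗V_{t₂} -/
def Y'map (t₁ t₂ : Triple) : V →ₗ[ℚ] VV :=
  bmap ((t₁.lam + t₂.lam)⁻¹ •
      (t₁.lam • (vv ⊗ₜ[ℚ] ww) - (sgn t₁.sg * t₂.lam) • (ww ⊗ₜ[ℚ] vv)))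
    (ww ⊗ₜ[ℚ] ww)

/-- L_{t₁,t₂} : V_{t₁}⊗V_{t₂} → V_{t₁+t₂+e₂} -/
def Lmap (t₁ t₂ : Triple) : VV →ₗ[ℚ] V :=
  TensorProduct.lift (LinearMap.mk₂ ℚ
    (fun x y => ((x.1 * y.1 : ℚ),
      (t₁.lam / (t₁.lam + t₂.lam)) * (x.2 * y.1)
        + (sgn t₁.sg * t₂.lam / (t₁.lam + t₂.lam)) * (x.1 * y.2)))
    (by intro x x' y; apply Prod.ext <;> simp <;> ring)
    (by intro a x y; apply Prod.ext <;> simp [smul_eq_mul] <;> ring)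
    (by intro x y y'; apply Prod.ext <;> simp <;> ring)
    (by intro a x y; apply Prod.ext <;> simp [smul_eq_mul] <;> ring))

/-- L'_{t₁,t₂} : V_{t₁}⊗V_{t₂} → V_{t₁+t₂−e₂+e₃} -/
def L'map (t₁ t₂ : Triple) : VV →ₗ[ℚ] V :=
  TensorProduct.lift (LinearMap.mk₂ ℚ
    (fun x y => ((x.1 * y.2 - sgn t₁.sg * (x.2 * y.1) : ℚ), (x.2 * y.2 : ℚ)))
    (by intro x x' y; apply Prod.ext <;> simp <;> ring)
    (by intro a x y; apply Prod.ext <;> simp [smul_eq_mul] <;> ring)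
    (by intro x y y'; apply Prod.ext <;> simp <;> ring)
    (by intro a x y; apply Prod.ext <;> simp [smul_eq_mul] <;> ring))

/-- ∩_t : V_{t*}⊗V_t → ℚ -/
def capMap (t : Triple) : VV →ₗ[ℚ] ℚ :=
  TensorProduct.lift (LinearMap.mk₂ ℚ
    (fun x y => (x.1 * y.2 + sgn t.sg * (x.2 * y.1) : ℚ))
    (by intro x x' y; simp; ring)
    (by intro a x y; simp [smul_eq_mul]; ring)
    (by intro x y y'; simp; ring)
    (by intro a x y; simp [smul_eq_mul]; ring))

/-- ∪_t : ℚ → V_{t*}⊗V_t -/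
def cupMap (t : Triple) : ℚ →ₗ[ℚ] VV :=
  LinearMap.toSpanSingleton ℚ VV (ww ⊗ₜ[ℚ] vv - sgn t.sg • (vv ⊗ₜ[ℚ] ww))


/-- t₄ = t₁+t₂+e₂ -/
def T4 (t₁ t₂ : Triple) : Triple := t₁ + t₂ + e₂
/-- t₅ = t₄+t₃+e₂ -/
def T5 (t₁ t₂ t₃ : Triple) : Triple := T4 t₁ t₂ + t₃ + e₂
/-- t₆ = t₂+t₃+e₂ -/
def T6 (t₂ t₃ : Triple) : Triple := t₂ + t₃ + e₂
/-- t₇ = t₄−2e₂+e₃ -/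
def T7 (t₁ t₂ : Triple) : Triple := T4 t₁ t₂ - e₂ - e₂ + e₃
/-- t₈ = t₅−2e₂+e₃ -/
def T8 (t₁ t₂ t₃ : Triple) : Triple := T5 t₁ t₂ t₃ - e₂ - e₂ + e₃
/-- t₉ = t₆−2e₂+e₃ -/
def T9 (t₂ t₃ : Triple) : Triple := T6 t₂ t₃ - e₂ - e₂ + e₃
/-- κ = λ₂(λ₁+λ₂+λ₃)/((λ₁+λ₂)(λ₂+λ₃)) -/
def kap (t₁ t₂ t₃ : Triple) : ℚ :=
  t₂.lam * (t₁.lam + t₂.lam + t₃.lam) / ((t₁.lam + t₂.lam) * (t₂.lam + t₃.lam))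

/-!
When `λ₁ + λ₂ ≠ 0`, the maps `Y`, `Y'`, `L`, `L'` split `V_{t₁} ⊗ V_{t₂}` as a direct sum:
`Y ∘ L + Y' ∘ L' = id`. Hence a map `f` into `V_{t₁} ⊗ V_{t₆}` or `V_{t₁} ⊗ V_{t₉}` expands as
`Y ∘ (L ∘ f) + Y' ∘ (L' ∘ f)`. For the composites `f` of the theorem, `L ∘ f` and `L' ∘ f` are
multiples of `L` or `L'` on the source, and these multiples (the 6j-symbols) are read off on basis
vectors, where the only input besides field arithmetic is `((-1)^σ)² = 1`. The composite
`(I ⊗ L') ∘ (Y ⊗ I)` has a single term and is compared on basis vectors directly.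
-/

theorem sgn_zero : sgn 0 = 1 :=
  rfl

theorem sgn_one : sgn 1 = -1 :=
  rfl

theorem sgn_add (a b : ZMod 2) : sgn (a + b) = sgn a * sgn b := by
  obtain rfl | rfl : a = 0 ∨ a = 1 := by decide +revert
  · simp [sgn_zero]
  obtain rfl | rfl : b = 0 ∨ b = 1 := by decide +revert
  · simp [sgn_zero]
  · simp [CharTwo.add_self_eq_zero, sgn_zero, sgn_one]

theorem sgn_mul_self (a : ZMod 2) : sgn a * sgn a = 1 := by
  rw [← sgn_add, CharTwo.add_self_eq_zero, sgn_zero]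

section Weights

variable (t₁ t₂ : Triple)

theorem sgn_T4 : sgn (T4 t₁ t₂).sg = sgn t₁.sg * sgn t₂.sg := by
  change sgn (t₁.sg + t₂.sg + 0) = _
  rw [add_zero, sgn_add]

theorem sgn_T7 : sgn (T7 t₁ t₂).sg = -(sgn t₁.sg * sgn t₂.sg) := by
  change sgn ((T4 t₁ t₂).sg + -0 + -0 + 1) = _
  simp [sgn_add, sgn_T4, sgn_one]

theorem lam_T4 : (T4 t₁ t₂).lam = t₁.lam + t₂.lam :=
  add_zero _

theorem lam_T6 : (T6 t₁ t₂).lam = t₁.lam + t₂.lam :=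
  add_zero _

theorem lam_T7 : (T7 t₁ t₂).lam = t₁.lam + t₂.lam := by
  change (T4 t₁ t₂).lam + -0 + -0 + 0 = _
  simp [lam_T4]

theorem lam_T9 : (T9 t₁ t₂).lam = t₁.lam + t₂.lam :=
  lam_T7 t₁ t₂

end Weights

section Basis

variable {M : Type*} [AddCommGroup M] [Module ℚ M]

theorem bmap_vv (p q : M) : bmap p q vv = p := by
  simp [bmap, vv]

theorem bmap_ww (p q : M) : bmap p q ww = q := by
  simp [bmap, ww]

theorem V_hom_ext {f g : V →ₗ[ℚ] M} (hv : f vv = g vv) (hw : f ww = g ww) : f = g :=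
  LinearMap.prod_ext (LinearMap.ext_ring hv) (LinearMap.ext_ring hw)

theorem VV_hom_ext {f g : VV →ₗ[ℚ] M}
    (hvv : f (vv ⊗ₜ vv) = g (vv ⊗ₜ vv)) (hvw : f (vv ⊗ₜ ww) = g (vv ⊗ₜ ww))
    (hwv : f (ww ⊗ₜ vv) = g (ww ⊗ₜ vv)) (hww : f (ww ⊗ₜ ww) = g (ww ⊗ₜ ww)) : f = g :=
  TensorProduct.ext <| V_hom_ext (V_hom_ext hvv hvw) (V_hom_ext hwv hww)

end Basis

section Values

variable (t₁ t₂ : Triple)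

theorem Ymap_vv : Ymap t₁ t₂ vv = vv ⊗ₜ vv :=
  bmap_vv _ _

theorem Ymap_ww : Ymap t₁ t₂ ww = ww ⊗ₜ vv + sgn t₁.sg • (vv ⊗ₜ ww) :=
  bmap_ww _ _

theorem Y'map_vv : Y'map t₁ t₂ vv = (t₁.lam + t₂.lam)⁻¹ •
    (t₁.lam • (vv ⊗ₜ ww) - (sgn t₁.sg * t₂.lam) • (ww ⊗ₜ vv)) :=
  bmap_vv _ _

theorem Y'map_ww : Y'map t₁ t₂ ww = ww ⊗ₜ ww :=
  bmap_ww _ _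

theorem Lmap_vv_vv : Lmap t₁ t₂ (vv ⊗ₜ vv) = vv := by
  simp [Lmap, vv]

theorem Lmap_vv_ww :
    Lmap t₁ t₂ (vv ⊗ₜ ww) = (sgn t₁.sg * t₂.lam / (t₁.lam + t₂.lam)) • ww := by
  simp [Lmap, vv, ww]

theorem Lmap_ww_vv : Lmap t₁ t₂ (ww ⊗ₜ vv) = (t₁.lam / (t₁.lam + t₂.lam)) • ww := by
  simp [Lmap, vv, ww]

theorem Lmap_ww_ww : Lmap t₁ t₂ (ww ⊗ₜ ww) = 0 := by
  simp [Lmap, ww]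

theorem L'map_vv_vv : L'map t₁ t₂ (vv ⊗ₜ vv) = 0 := by
  simp [L'map, vv]

theorem L'map_vv_ww : L'map t₁ t₂ (vv ⊗ₜ ww) = vv := by
  simp [L'map, vv, ww]

theorem L'map_ww_vv : L'map t₁ t₂ (ww ⊗ₜ vv) = -sgn t₁.sg • vv := by
  simp [L'map, vv, ww]

theorem L'map_ww_ww : L'map t₁ t₂ (ww ⊗ₜ ww) = ww := by
  simp [L'map, ww]

end Values

/-- The composite `(I ⊗ L) ∘ (Y ⊗ I)` that splits the left factor by `Y` and merges the right half
with the right factor by `L`; the associator is implicit in the usual notation. -/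
def splitMerge {R A B C D E : Type*} [CommSemiring R] [AddCommMonoid A] [AddCommMonoid B]
    [AddCommMonoid C] [AddCommMonoid D] [AddCommMonoid E] [Module R A] [Module R B] [Module R C]
    [Module R D] [Module R E] (Y : A →ₗ[R] B ⊗[R] C) (L : C ⊗[R] D →ₗ[R] E) :
    A ⊗[R] D →ₗ[R] B ⊗[R] E :=
  TensorProduct.map LinearMap.id L ∘ₗ (TensorProduct.assoc R B C D).toLinearMap ∘ₗ
    TensorProduct.map Y LinearMap.id

section SplitMerge

variable {D E : Type*} [AddCommGroup D] [Module ℚ D] [AddCommGroup E] [Module ℚ E]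
  (t₁ t₂ : Triple) (L : V ⊗[ℚ] D →ₗ[ℚ] E) (y : D)

theorem splitMerge_Ymap_vv : splitMerge (Ymap t₁ t₂) L (vv ⊗ₜ y) = vv ⊗ₜ L (vv ⊗ₜ y) := by
  simp [splitMerge, Ymap_vv]

theorem splitMerge_Ymap_ww : splitMerge (Ymap t₁ t₂) L (ww ⊗ₜ y) =
    ww ⊗ₜ L (vv ⊗ₜ y) + sgn t₁.sg • (vv ⊗ₜ L (ww ⊗ₜ y)) := by
  simp [splitMerge, Ymap_ww, add_tmul, ← smul_tmul']

theorem splitMerge_Y'map_vv : splitMerge (Y'map t₁ t₂) L (vv ⊗ₜ y) = (t₁.lam + t₂.lam)⁻¹ •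
    (t₁.lam • (vv ⊗ₜ L (ww ⊗ₜ y)) - (sgn t₁.sg * t₂.lam) • (ww ⊗ₜ L (vv ⊗ₜ y))) := by
  simp [splitMerge, Y'map_vv, sub_tmul, ← smul_tmul']

theorem splitMerge_Y'map_ww :
    splitMerge (Y'map t₁ t₂) L (ww ⊗ₜ y) = ww ⊗ₜ L (ww ⊗ₜ y) := by
  simp [splitMerge, Y'map_ww]

end SplitMerge

section Completeness

variable {t₁ t₂ : Triple}

theorem Ymap_comp_Lmap_add_Y'map_comp_L'map (h : t₁.lam + t₂.lam ≠ 0) :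
    Ymap t₁ t₂ ∘ₗ Lmap t₁ t₂ + Y'map t₁ t₂ ∘ₗ L'map t₁ t₂ = LinearMap.id := by
  apply VV_hom_ext <;>
    simp only [LinearMap.comp_apply, LinearMap.add_apply, LinearMap.id_apply, map_smul, map_zero,
      add_zero, zero_add, Lmap_vv_vv, Lmap_vv_ww, Lmap_ww_vv, Lmap_ww_ww, L'map_vv_vv, L'map_vv_ww,
      L'map_ww_vv, L'map_ww_ww, Ymap_vv, Ymap_ww, Y'map_vv, Y'map_ww]
  case hvw =>
    match_scalars <;> field_simp
    · ring
    · linear_combination t₂.lam * sgn_mul_self t₁.sg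
  case hwv =>
    match_scalars <;> field_simp
    · linear_combination t₂.lam * sgn_mul_self t₁.sg
    · ring

theorem Ymap_comp_Lmap_comp_add_Y'map_comp_L'map_comp {M : Type*} [AddCommGroup M] [Module ℚ M]
    (h : t₁.lam + t₂.lam ≠ 0) (f : M →ₗ[ℚ] VV) :
    Ymap t₁ t₂ ∘ₗ (Lmap t₁ t₂ ∘ₗ f) + Y'map t₁ t₂ ∘ₗ (L'map t₁ t₂ ∘ₗ f) = f := by
  rw [← LinearMap.comp_assoc, ← LinearMap.comp_assoc, ← LinearMap.add_comp,
    Ymap_comp_Lmap_add_Y'map_comp_L'map h, LinearMap.id_comp]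

end Completeness

section Coefficients

variable {t₁ t₂ t₃ : Triple}

theorem Lmap_comp_splitMerge_Ymap_Lmap (h₂₃ : t₂.lam + t₃.lam ≠ 0) :
    Lmap t₁ (T6 t₂ t₃) ∘ₗ splitMerge (Ymap t₁ t₂) (Lmap t₂ t₃) = Lmap (T4 t₁ t₂) t₃ := by
  apply VV_hom_ext <;>
    simp only [LinearMap.comp_apply, map_add, map_smul, tmul_smul, tmul_zero, smul_zero, add_zero,
      splitMerge_Ymap_vv, splitMerge_Ymap_ww, Lmap_vv_vv, Lmap_vv_ww, Lmap_ww_vv, Lmap_ww_ww,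
      sgn_T4, lam_T4, lam_T6, ← add_assoc]
  case hvw => match_scalars; field_simp
  case hwv =>
    match_scalars
    field_simp
    linear_combination t₂.lam / (t₁.lam + t₂.lam + t₃.lam) * sgn_mul_self t₁.sg

theorem L'map_comp_splitMerge_Ymap_Lmap (h₂₃ : t₂.lam + t₃.lam ≠ 0) :
    L'map t₁ (T6 t₂ t₃) ∘ₗ splitMerge (Ymap t₁ t₂) (Lmap t₂ t₃) =
      (sgn t₂.sg * t₃.lam / (t₂.lam + t₃.lam)) • L'map (T4 t₁ t₂) t₃ := by
  apply VV_hom_ext <;>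
    simp only [LinearMap.comp_apply, LinearMap.smul_apply, map_add, map_smul, tmul_smul, tmul_zero,
      smul_zero, add_zero, splitMerge_Ymap_vv, splitMerge_Ymap_ww, Lmap_vv_vv, Lmap_vv_ww,
      Lmap_ww_vv, Lmap_ww_ww, L'map_vv_vv, L'map_vv_ww, L'map_ww_vv, L'map_ww_ww, sgn_T4]
  case hwv =>
    match_scalars
    field_simp
    linear_combination sgn t₁.sg * t₃.lam * sgn_mul_self t₂.sg

theorem Lmap_comp_splitMerge_Y'map_L'map (h₁₂ : t₁.lam + t₂.lam ≠ 0) :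
    Lmap t₁ (T9 t₂ t₃) ∘ₗ splitMerge (Y'map t₁ t₂) (L'map t₂ t₃) =
      -((sgn t₂.sg * t₁.lam / (t₁.lam + t₂.lam)) • Lmap (T7 t₁ t₂) t₃) := by
  apply VV_hom_ext <;>
    simp only [LinearMap.comp_apply, LinearMap.smul_apply, LinearMap.neg_apply, map_sub, map_smul,
      tmul_smul, tmul_zero, smul_zero, sub_zero, neg_zero, splitMerge_Y'map_vv,
      splitMerge_Y'map_ww, Lmap_vv_vv, Lmap_vv_ww, Lmap_ww_vv, Lmap_ww_ww, L'map_vv_vv, L'map_vv_ww,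
      L'map_ww_vv, L'map_ww_ww, sgn_T7, lam_T7, lam_T9, ← add_assoc]
  case hvv => match_scalars; ring
  case hvw =>
    match_scalars
    field_simp
    linear_combination (-(t₁.lam * sgn t₁.sg * t₃.lam) / (t₁.lam + t₂.lam + t₃.lam)) *
      sgn_mul_self t₂.sg
  case hwv => match_scalars; field_simp

theorem L'map_comp_splitMerge_Y'map_L'map (h₁₂ : t₁.lam + t₂.lam ≠ 0) :
    L'map t₁ (T9 t₂ t₃) ∘ₗ splitMerge (Y'map t₁ t₂) (L'map t₂ t₃) = L'map (T7 t₁ t₂) t₃ := by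
  apply VV_hom_ext <;>
    simp only [LinearMap.comp_apply, map_sub, map_smul, tmul_smul, tmul_zero, smul_zero, sub_zero,
      splitMerge_Y'map_vv, splitMerge_Y'map_ww, L'map_vv_vv, L'map_vv_ww, L'map_ww_vv, L'map_ww_ww,
      sgn_T7]
  case hvw =>
    match_scalars
    field_simp
    linear_combination t₂.lam * sgn_mul_self t₁.sg
  case hwv => match_scalars; ring

theorem Lmap_comp_splitMerge_Y'map_Lmap (h₂₃ : t₂.lam + t₃.lam ≠ 0) :
    Lmap t₁ (T6 t₂ t₃) ∘ₗ splitMerge (Y'map t₁ t₂) (Lmap t₂ t₃) = 0 := by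
  apply VV_hom_ext <;>
    simp only [LinearMap.comp_apply, LinearMap.zero_apply, map_sub, map_smul, map_zero, tmul_smul,
      tmul_zero, smul_zero, sub_zero, splitMerge_Y'map_vv, splitMerge_Y'map_ww, Lmap_vv_vv,
      Lmap_vv_ww, Lmap_ww_vv, Lmap_ww_ww, lam_T6, ← add_assoc]
  case hvv =>
    match_scalars
    field_simp
    ring

theorem L'map_comp_splitMerge_Y'map_Lmap (h₁₂ : t₁.lam + t₂.lam ≠ 0)
    (h₂₃ : t₂.lam + t₃.lam ≠ 0) (h₁₂₃ : t₁.lam + t₂.lam + t₃.lam ≠ 0) :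
    L'map t₁ (T6 t₂ t₃) ∘ₗ splitMerge (Y'map t₁ t₂) (Lmap t₂ t₃) =
      kap t₁ t₂ t₃ • Lmap (T7 t₁ t₂) t₃ := by
  apply VV_hom_ext <;>
    simp only [LinearMap.comp_apply, LinearMap.smul_apply, map_sub, map_smul, map_zero, tmul_smul,
      tmul_zero, smul_zero, splitMerge_Y'map_vv, splitMerge_Y'map_ww, Lmap_vv_vv,
      Lmap_vv_ww, Lmap_ww_vv, Lmap_ww_ww, L'map_vv_ww, L'map_ww_vv, L'map_ww_ww, sgn_T7, lam_T7,
      kap]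
  case hvv =>
    match_scalars
    field_simp
    linear_combination t₂.lam * (t₂.lam + t₃.lam) * sgn_mul_self t₁.sg
  case hvw => match_scalars; field_simp
  case hwv => match_scalars; field_simp

end Coefficients

section Expansions

variable {t₁ t₂ t₃ : Triple}

theorem splitMerge_Ymap_Lmap (h₂₃ : t₂.lam + t₃.lam ≠ 0)
    (h₁₂₃ : t₁.lam + t₂.lam + t₃.lam ≠ 0) :
    splitMerge (Ymap t₁ t₂) (Lmap t₂ t₃) =
      Ymap t₁ (T6 t₂ t₃) ∘ₗ Lmap (T4 t₁ t₂) t₃ +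
        (sgn t₂.sg * t₃.lam / (t₂.lam + t₃.lam)) •
          (Y'map t₁ (T6 t₂ t₃) ∘ₗ L'map (T4 t₁ t₂) t₃) := by
  have h : t₁.lam + (T6 t₂ t₃).lam ≠ 0 := by rwa [lam_T6, ← add_assoc]
  rw [← Ymap_comp_Lmap_comp_add_Y'map_comp_L'map_comp h (splitMerge (Ymap t₁ t₂) (Lmap t₂ t₃)),
    Lmap_comp_splitMerge_Ymap_Lmap h₂₃, L'map_comp_splitMerge_Ymap_Lmap h₂₃, LinearMap.comp_smul]

theorem splitMerge_Y'map_L'map (h₁₂ : t₁.lam + t₂.lam ≠ 0)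
    (h₁₂₃ : t₁.lam + t₂.lam + t₃.lam ≠ 0) :
    splitMerge (Y'map t₁ t₂) (L'map t₂ t₃) =
      Y'map t₁ (T9 t₂ t₃) ∘ₗ L'map (T7 t₁ t₂) t₃ -
        (sgn t₂.sg * t₁.lam / (t₁.lam + t₂.lam)) •
          (Ymap t₁ (T9 t₂ t₃) ∘ₗ Lmap (T7 t₁ t₂) t₃) := by
  have h : t₁.lam + (T9 t₂ t₃).lam ≠ 0 := by rwa [lam_T9, ← add_assoc]
  rw [← Ymap_comp_Lmap_comp_add_Y'map_comp_L'map_comp h (splitMerge (Y'map t₁ t₂) (L'map t₂ t₃)),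
    Lmap_comp_splitMerge_Y'map_L'map h₁₂, L'map_comp_splitMerge_Y'map_L'map h₁₂,
    LinearMap.comp_neg, LinearMap.comp_smul]
  module

theorem splitMerge_Ymap_L'map :
    splitMerge (Ymap t₁ t₂) (L'map t₂ t₃) =
      Ymap t₁ (T9 t₂ t₃) ∘ₗ L'map (T4 t₁ t₂) t₃ := by
  apply VV_hom_ext <;>
    simp only [LinearMap.comp_apply, splitMerge_Ymap_vv, splitMerge_Ymap_ww, L'map_vv_vv,
      L'map_vv_ww, L'map_ww_vv, L'map_ww_ww, map_smul, map_zero, Ymap_vv, Ymap_ww, tmul_smul,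
      tmul_zero, sgn_T4]
  case hwv => module

theorem splitMerge_Y'map_Lmap (h₁₂ : t₁.lam + t₂.lam ≠ 0) (h₂₃ : t₂.lam + t₃.lam ≠ 0)
    (h₁₂₃ : t₁.lam + t₂.lam + t₃.lam ≠ 0) :
    splitMerge (Y'map t₁ t₂) (Lmap t₂ t₃) =
      kap t₁ t₂ t₃ • (Y'map t₁ (T6 t₂ t₃) ∘ₗ Lmap (T7 t₁ t₂) t₃) := by
  have h : t₁.lam + (T6 t₂ t₃).lam ≠ 0 := by rwa [lam_T6, ← add_assoc]
  rw [← Ymap_comp_Lmap_comp_add_Y'map_comp_L'map_comp h (splitMerge (Y'map t₁ t₂) (Lmap t₂ t₃)),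
    Lmap_comp_splitMerge_Y'map_Lmap h₂₃,
    L'map_comp_splitMerge_Y'map_Lmap h₁₂ h₂₃ h₁₂₃, LinearMap.comp_smul,
    LinearMap.comp_zero, zero_add]

end Expansions

/-- Corollary 27. -/
theorem stmt15 (t₁ t₂ t₃ : Triple)
    (h₁ : t₁.lam ≠ 0) (h₂ : t₂.lam ≠ 0) (h₃ : t₃.lam ≠ 0)
    (h₁₂ : t₁.lam + t₂.lam ≠ 0) (h₂₃ : t₂.lam + t₃.lam ≠ 0)
    (h₁₂₃ : t₁.lam + t₂.lam + t₃.lam ≠ 0) :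
    TensorProduct.map LinearMap.id (Lmap t₂ t₃)
        ∘ₗ (TensorProduct.assoc ℚ V V V).toLinearMap
        ∘ₗ TensorProduct.map (Ymap t₁ t₂) LinearMap.id =
      Ymap t₁ (T6 t₂ t₃) ∘ₗ Lmap (T4 t₁ t₂) t₃
      + (sgn t₂.sg * t₃.lam / (t₂.lam + t₃.lam)) •
          (Y'map t₁ (T6 t₂ t₃) ∘ₗ L'map (T4 t₁ t₂) t₃) ∧
    TensorProduct.map LinearMap.id (L'map t₂ t₃)
        ∘ₗ (TensorProduct.assoc ℚ V V V).toLinearMap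
        ∘ₗ TensorProduct.map (Y'map t₁ t₂) LinearMap.id =
      Y'map t₁ (T9 t₂ t₃) ∘ₗ L'map (T7 t₁ t₂) t₃
      - (sgn t₂.sg * t₁.lam / (t₁.lam + t₂.lam)) •
          (Ymap t₁ (T9 t₂ t₃) ∘ₗ Lmap (T7 t₁ t₂) t₃) ∧
    TensorProduct.map LinearMap.id (L'map t₂ t₃)
        ∘ₗ (TensorProduct.assoc ℚ V V V).toLinearMap
        ∘ₗ TensorProduct.map (Ymap t₁ t₂) LinearMap.id =
      Ymap t₁ (T9 t₂ t₃) ∘ₗ L'map (T4 t₁ t₂) t₃ ∧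
    TensorProduct.map LinearMap.id (Lmap t₂ t₃)
        ∘ₗ (TensorProduct.assoc ℚ V V V).toLinearMap
        ∘ₗ TensorProduct.map (Y'map t₁ t₂) LinearMap.id =
      kap t₁ t₂ t₃ • (Y'map t₁ (T6 t₂ t₃) ∘ₗ Lmap (T7 t₁ t₂) t₃) := by
  exact ⟨splitMerge_Ymap_Lmap h₂₃ h₁₂₃, splitMerge_Y'map_L'map h₁₂ h₁₂₃,
    splitMerge_Ymap_L'map, splitMerge_Y'map_Lmap h₁₂ h₂₃ h₁₂₃⟩

end
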